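/- Let α be a type, Δ : List α → Bool, and let S and E be finite sets of lists over α. Suppose (s, t, a) ∈ S × S × α is a witness of inconsistency: the rows of s and t agree on E (Δ(s ++ e) = Δ(t ++ e) for all e ∈ E), but there is some e ∈ E with Δ(s ++ [a] ++ e) ≠ Δ(t ++ [a] ++ e). Let E' = E ∪ {a :: e} for such an e. Then the number of distinct rows of elements of S with respect to E' is strictly greater than the number of distinct rows of elements of S with respect to E. -/

import Mathlib

/-- The row of `s` with respect to the set `E` of separating sequences:
the function assigning to each `e ∈ E` the table entry `Δ (s ++ e)`
(and `none` outside of `E`). -/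
def row {β : Type*} [DecidableEq β] (Δ : List β → Bool) (E : Finset (List β))
    (s : List β) : List β → Option Bool :=
  fun e => if e ∈ E then some (Δ (s ++ e)) else none

theorem stmt10 {α : Type*} [DecidableEq α] (Δ : List α → Bool) (S E : Finset (List α))
    (s t : List α) (a : α) (hs : s ∈ S) (ht : t ∈ S)
    (hagree : ∀ e ∈ E, Δ (s ++ e) = Δ (t ++ e))
    (e : List α) (he : e ∈ E)
    (hdiff : Δ (s ++ [a] ++ e) ≠ Δ (t ++ [a] ++ e)) :
    (row Δ E '' ↑S).ncard < (row Δ (insert (a :: e) E) '' ↑S).ncard := by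
  have key : ∀ u, row Δ E u = (fun (f : List α → Option Bool) x => if x ∈ E then f x else none)
      (row Δ (insert (a :: e) E) u) := by
    intro u
    funext x
    by_cases hx : x ∈ E <;> simp [row, hx]
  have himg : row Δ E '' (S : Set (List α)) =
      (fun (f : List α → Option Bool) x => if x ∈ E then f x else none) ''
        (row Δ (insert (a :: e) E) '' (S : Set (List α))) := by
    rw [Set.image_image]
    exact Set.image_congr fun u _ => key u
  have hfin : (row Δ (insert (a :: e) E) '' (S : Set (List α))).Finite :=
    S.finite_toSet.image _
  rw [himg]
  refine lt_of_le_of_ne (Set.ncard_image_le hfin) fun heq => hdiff ?_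
  have hinj := (Set.ncard_image_iff hfin).1 heq
  have hst : row Δ E s = row Δ E t := by
    funext x
    by_cases hx : x ∈ E
    · simp [row, hx, hagree x hx]
    · simp [row, hx]
  have h := hinj (Set.mem_image_of_mem _ hs) (Set.mem_image_of_mem _ ht)
    ((key s).symm.trans (hst.trans (key t)))
  have h2 := congrFun h (a :: e)
  simpa [row] using h2
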